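/- arXiv:1804.10224 — 2 statements merged into one kernel-verified Lean document; each statement's English description precedes it below -/
import Mathlib

section
/- Suppose the sequences S_n(t), S̄_n(t) ∈ ℂ^N, v_n(t) ∈ ℂ, ψ_n(t) ∈ ℂ, φ_n(t), χ_n(t) ∈ ℂ^N (n ∈ ℤ, t ∈ ℝ, all differentiable in t) satisfy, for all n and t, the spectral problem (YO-L) and the time evolution (YO-M), and suppose moreover that ψ_{n+1}(t) + ψ_{n−1}(t) ≠ 0 for all n and t. Then (S, S̄, v) satisfies the discrete multicomponent Yajima–Oikawa system (dgvYO): i S_{n,t} = v_n (S_{n+1} + S_{n−1}) − c S_n, i S̄_{n,t} = −v_n (S̄_{n+1} + S̄_{n−1}) + c S̄_n, and v_{n,t} = (1/2) v_n Δ⁺(⟨S_n, S̄_{n−1}⟩ + ⟨S_{n−1}, S̄_n⟩) for all n and t. -/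
open Complex BigOperators

/-- Bilinear pairing on `ℂ^N` (no complex conjugation). -/
noncomputable def pair {N : ℕ} (a b : Fin N → ℂ) : ℂ := ∑ k, a k * b k

theorem pair_add_l {N : ℕ} (a b d : Fin N → ℂ) : pair (a + b) d = pair a d + pair b d := by
  simp [pair, add_mul, Finset.sum_add_distrib]
theorem pair_add_r {N : ℕ} (a b d : Fin N → ℂ) : pair d (a + b) = pair d a + pair d b := by
  simp [pair, mul_add, Finset.sum_add_distrib]
theorem pair_sub_l {N : ℕ} (a b d : Fin N → ℂ) : pair (a - b) d = pair a d - pair b d := by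
  simp [pair, sub_mul, Finset.sum_sub_distrib]
theorem pair_sub_r {N : ℕ} (a b d : Fin N → ℂ) : pair d (a - b) = pair d a - pair d b := by
  simp [pair, mul_sub, Finset.sum_sub_distrib]
theorem pair_neg_r {N : ℕ} (a d : Fin N → ℂ) : pair d (-a) = - pair d a := by
  simp [pair]
theorem pair_smul_l {N : ℕ} (x : ℂ) (a d : Fin N → ℂ) : pair (x • a) d = x * pair a d := by
  simp [pair, Finset.mul_sum, mul_assoc]
theorem pair_smul_r {N : ℕ} (x : ℂ) (a d : Fin N → ℂ) : pair d (x • a) = x * pair d a := by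
  simp [pair, Finset.mul_sum, mul_left_comm]
theorem pair_hasDerivAt {N : ℕ} {a b : ℝ → Fin N → ℂ} {a' b' : Fin N → ℂ} {t : ℝ}
    (ha : HasDerivAt a a' t) (hb : HasDerivAt b b' t) :
    HasDerivAt (fun s => pair (a s) (b s)) (pair a' (b t) + pair (a t) b') t := by
  have h := HasDerivAt.fun_sum (u := Finset.univ)
    (fun k _ => ((hasDerivAt_pi.1 ha) k).mul ((hasDerivAt_pi.1 hb) k))
  simpa [pair, Finset.sum_add_distrib] using h

theorem stmt1 {N : ℕ} (hN : 1 ≤ N)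
    (S Sb : ℤ → ℝ → Fin N → ℂ) (v ψ : ℤ → ℝ → ℂ)
    (φ χ : ℤ → ℝ → Fin N → ℂ) (c lam : ℂ)
    (hSd : ∀ n, Differentiable ℝ (S n)) (hSbd : ∀ n, Differentiable ℝ (Sb n))
    (hvd : ∀ n, Differentiable ℝ (v n)) (hψd : ∀ n, Differentiable ℝ (ψ n))
    (hφd : ∀ n, Differentiable ℝ (φ n)) (hχd : ∀ n, Differentiable ℝ (χ n))
    (hL1 : ∀ (n : ℤ) (t : ℝ), v n t * (ψ (n+1) t + ψ (n-1) t)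
      = lam * ψ n t - pair (S n t) (φ n t) - pair (χ n t) (Sb n t))
    (hL2 : ∀ (n : ℤ) (t : ℝ), φ (n+1) t - φ n t
      = ((Complex.I/2) * (ψ (n+1) t + ψ (n-1) t)) • Sb n t)
    (hL3 : ∀ (n : ℤ) (t : ℝ), χ (n+1) t + χ n t
      = ((Complex.I/2) * (ψ (n+1) t + ψ (n-1) t)) • S n t)
    (hM1 : ∀ (n : ℤ) (t : ℝ), Complex.I * deriv (ψ n) t
      = v n t * (ψ (n+1) t + ψ (n-1) t) - c * ψ n t)
    (hM2 : ∀ (n : ℤ) (t : ℝ), deriv (φ n) t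
      = ((1/2) * v n t * (ψ (n+1) t + ψ (n-1) t)) • Sb (n-1) t
        - ((1/2) * v (n-1) t * (ψ n t + ψ (n-2) t)) • Sb n t)
    (hM3 : ∀ (n : ℤ) (t : ℝ), deriv (χ n) t
      = ((1/2) * v n t * (ψ (n+1) t + ψ (n-1) t)) • S (n-1) t
        + ((1/2) * v (n-1) t * (ψ n t + ψ (n-2) t)) • S n t
        + (2 * Complex.I * c) • χ n t)
    (hne : ∀ (n : ℤ) (t : ℝ), ψ (n+1) t + ψ (n-1) t ≠ 0) :
    ∀ (n : ℤ) (t : ℝ),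
      (Complex.I • deriv (S n) t = (v n t) • (S (n+1) t + S (n-1) t) - c • S n t)
      ∧ (Complex.I • deriv (Sb n) t = -((v n t) • (Sb (n+1) t + Sb (n-1) t)) + c • Sb n t)
      ∧ (deriv (v n) t = (1/2) * v n t *
          ((pair (S (n+1) t) (Sb n t) + pair (S n t) (Sb (n+1) t))
            - (pair (S n t) (Sb (n-1) t) + pair (S (n-1) t) (Sb n t)))) := by
  have hI : Complex.I * Complex.I = -1 := Complex.I_mul_I
  have e1 : ∀ n : ℤ, n + 1 - 1 = n := fun n => by ring
  have e2 : ∀ n : ℤ, n - 1 + 1 = n := fun n => by ring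
  have e3 : ∀ n : ℤ, n + 1 - 2 = n - 1 := fun n => by ring
  have e4 : ∀ n : ℤ, n - 1 - 1 = n - 2 := fun n => by ring
  have dψ : ∀ n t, HasDerivAt (ψ n) (deriv (ψ n) t) t := fun n t => (hψd n t).hasDerivAt
  have dS : ∀ n t, HasDerivAt (S n) (deriv (S n) t) t := fun n t => (hSd n t).hasDerivAt
  have dSb : ∀ n t, HasDerivAt (Sb n) (deriv (Sb n) t) t := fun n t => (hSbd n t).hasDerivAt
  have dφ : ∀ n t, HasDerivAt (φ n) (deriv (φ n) t) t := fun n t => (hφd n t).hasDerivAt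
  have dχ : ∀ n t, HasDerivAt (χ n) (deriv (χ n) t) t := fun n t => (hχd n t).hasDerivAt
  have dv : ∀ n t, HasDerivAt (v n) (deriv (v n) t) t := fun n t => (hvd n t).hasDerivAt
  have dP : ∀ n t, HasDerivAt (fun s => ψ (n+1) s + ψ (n-1) s)
      (deriv (ψ (n+1)) t + deriv (ψ (n-1)) t) t := fun n t => (dψ (n+1) t).add (dψ (n-1) t)
  intro n t
  have m1 := hM1 (n+1) t
  have m2 := hM1 (n-1) t
  have m0 := hM1 n t
  rw [e1] at m1
  rw [e2, e4] at m2
  have hP := hne n t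
  have hA : Complex.I • deriv (S n) t = (v n t) • (S (n+1) t + S (n-1) t) - c • S n t := by
    funext k
    have h1 := (hasDerivAt_pi.1 ((dχ (n+1) t).add (dχ n t))) k
    have h2 := (((dP n t).const_mul (Complex.I/2)).mul ((hasDerivAt_pi.1 (dS n t)) k))
    have h3 := h1.unique (h2.congr_of_eventuallyEq (Filter.Eventually.of_forall fun s => by
      simpa using congrFun (hL3 n s) k))
    have l := congrFun (hL3 n t) k
    rw [hM3, hM3, e1, e3] at h3
    simp only [Pi.add_apply, Pi.sub_apply, Pi.smul_apply, smul_eq_mul] at h3 l ⊢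
    apply mul_right_cancel₀ hP
    linear_combination (-2) * h3 + 4 * Complex.I * c * l - S n t k * m1 - S n t k * m2 + 2 * c * (ψ (n+1) t + ψ (n-1) t) * S n t k * hI
  have hB : Complex.I • deriv (Sb n) t = -((v n t) • (Sb (n+1) t + Sb (n-1) t)) + c • Sb n t := by
    funext k
    have h1 := (hasDerivAt_pi.1 ((dφ (n+1) t).sub (dφ n t))) k
    have h2 := (((dP n t).const_mul (Complex.I/2)).mul ((hasDerivAt_pi.1 (dSb n t)) k))
    have h3 := h1.unique (h2.congr_of_eventuallyEq (Filter.Eventually.of_forall fun s => by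
      simpa using congrFun (hL2 n s) k))
    rw [hM2, hM2, e1, e3] at h3
    simp only [Pi.add_apply, Pi.sub_apply, Pi.smul_apply, Pi.neg_apply, smul_eq_mul] at h3 ⊢
    apply mul_right_cancel₀ hP
    linear_combination (-2) * h3 - Sb n t k * m1 - Sb n t k * m2
  refine ⟨hA, hB, ?_⟩
  have h1 := (dv n t).mul (dP n t)
  have h2 := (((dψ n t).const_mul lam).sub (pair_hasDerivAt (dS n t) (dφ n t))).sub
    (pair_hasDerivAt (dχ n t) (dSb n t))
  have h3 := h1.unique (h2.congr_of_eventuallyEq (Filter.Eventually.of_forall fun s => by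
      simpa using hL1 n s))
  have a1 := congrArg (fun x => pair x (φ n t)) hA
  have a2 := congrArg (fun x => pair (χ n t) x) hB
  have lp := hL1 (n+1) t
  have lm := hL1 (n-1) t
  have l0 := hL1 n t
  have p1 : φ (n+1) t = φ n t + ((Complex.I/2) * (ψ (n+1) t + ψ (n-1) t)) • Sb n t := by
    rw [← hL2]; abel
  have p2 : φ (n-1) t = φ n t - ((Complex.I/2) * (ψ n t + ψ (n-2) t)) • Sb (n-1) t := by
    have := hL2 (n-1) t
    rw [e2, e4] at this
    rw [← this]; abel
  have c1 : χ (n+1) t = ((Complex.I/2) * (ψ (n+1) t + ψ (n-1) t)) • S n t - χ n t := by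
    rw [← hL3]; abel
  have c2 : χ (n-1) t = ((Complex.I/2) * (ψ n t + ψ (n-2) t)) • S (n-1) t - χ n t := by
    have := hL3 (n-1) t
    rw [e2, e4] at this
    rw [← this]; abel
  rw [p1, c1, e1] at lp
  rw [p2, c2, e2, e4] at lm
  rw [hM2, hM3] at h3
  simp only [pair_add_l, pair_add_r, pair_sub_l, pair_sub_r, pair_smul_l, pair_smul_r,
    pair_neg_r] at h3 a1 a2 lp lm
  apply mul_right_cancel₀ hP
  apply mul_left_cancel₀ Complex.I_ne_zero
  linear_combination Complex.I * h3 - a1 - a2 + lam * m0 - v n t * m1 - v n t * m2 - v n t * lp - v n t * lm + c * l0 - 2 * c * pair (χ n t) (Sb n t) * hI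
end

section
/- Let S, S̄ : ℝ² → ℂ^N, L : ℝ² → ℂ, ψ : ℝ² → ℂ and φ : ℝ² → ℂ^N be functions of (x,t) of class C³, and let ζ ∈ ℂ. Suppose that for all (x,t): ψ_{xx} + L ψ + ⟨S, φ⟩ = ζ ψ, φ_x = i S̄ ψ, i ψ_t = ψ_{xx} + L ψ, and φ_t = S̄ ψ_x − S̄_x ψ, and suppose moreover that ψ(x,t) ≠ 0 for all (x,t). Then S̄ satisfies the long wave–short wave equation i S̄_t = −S̄_{xx} − L S̄ for all (x,t). -/
open Complex BigOperators

/-- Partial derivative in the first (space) variable. -/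
noncomputable def pdx {E : Type*} [NormedAddCommGroup E] [NormedSpace ℝ E]
    (f : ℝ → ℝ → E) : ℝ → ℝ → E := fun x t => deriv (fun y => f y t) x

/-- Partial derivative in the second (time) variable. -/
noncomputable def pdt {E : Type*} [NormedAddCommGroup E] [NormedSpace ℝ E]
    (f : ℝ → ℝ → E) : ℝ → ℝ → E := fun x t => deriv (fun s => f x s) t

section aux
variable {E : Type*} [NormedAddCommGroup E] [NormedSpace ℝ E]

theorem aux_hx {f : ℝ → ℝ → E} (hf : Differentiable ℝ (Function.uncurry f)) (x t : ℝ) :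
    HasDerivAt (fun y => f y t) (fderiv ℝ (Function.uncurry f) (x, t) (1, 0)) x := by
  have h := (hf (x, t)).hasFDerivAt
  have h2 : HasDerivAt (fun y : ℝ => (y, t)) ((1 : ℝ), (0 : ℝ)) x :=
    (hasDerivAt_id x).prodMk (hasDerivAt_const x t)
  exact h.comp_hasDerivAt x h2

theorem aux_ht {f : ℝ → ℝ → E} (hf : Differentiable ℝ (Function.uncurry f)) (x t : ℝ) :
    HasDerivAt (fun s => f x s) (fderiv ℝ (Function.uncurry f) (x, t) (0, 1)) t := by
  have h := (hf (x, t)).hasFDerivAt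
  have h2 : HasDerivAt (fun y : ℝ => (x, y)) ((0 : ℝ), (1 : ℝ)) t :=
    (hasDerivAt_const t x).prodMk (hasDerivAt_id t)
  exact h.comp_hasDerivAt t h2

theorem aux_pdx {f : ℝ → ℝ → E} (hf : Differentiable ℝ (Function.uncurry f)) :
    Function.uncurry (pdx f) = fun p => fderiv ℝ (Function.uncurry f) p (1, 0) := by
  ext ⟨x, t⟩
  exact (aux_hx hf x t).deriv

theorem aux_pdt {f : ℝ → ℝ → E} (hf : Differentiable ℝ (Function.uncurry f)) :
    Function.uncurry (pdt f) = fun p => fderiv ℝ (Function.uncurry f) p (0, 1) := by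
  ext ⟨x, t⟩
  exact (aux_ht hf x t).deriv

theorem aux_dx {f : ℝ → ℝ → E} (hf : Differentiable ℝ (Function.uncurry f)) (x t : ℝ) :
    HasDerivAt (fun y => f y t) (pdx f x t) x :=
  (aux_hx hf x t).differentiableAt.hasDerivAt

theorem aux_dt {f : ℝ → ℝ → E} (hf : Differentiable ℝ (Function.uncurry f)) (x t : ℝ) :
    HasDerivAt (fun s => f x s) (pdt f x t) t :=
  (aux_ht hf x t).differentiableAt.hasDerivAt

theorem aux_diff2 {f : ℝ → ℝ → E} (hf : ContDiff ℝ 3 (Function.uncurry f)) :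
    Differentiable ℝ (fderiv ℝ (Function.uncurry f)) :=
  (hf.fderiv_right (m := 1) (by norm_num)).differentiable (by norm_num)

theorem aux_diff {f : ℝ → ℝ → E} (hf : ContDiff ℝ 3 (Function.uncurry f)) :
    Differentiable ℝ (Function.uncurry f) := hf.differentiable (by norm_num)

theorem aux_pdx_diff {f : ℝ → ℝ → E} (hf : ContDiff ℝ 3 (Function.uncurry f)) :
    Differentiable ℝ (Function.uncurry (pdx f)) := by
  rw [aux_pdx (aux_diff hf)]
  exact (aux_diff2 hf).clm_apply (differentiable_const _)

theorem aux_pdt_diff {f : ℝ → ℝ → E} (hf : ContDiff ℝ 3 (Function.uncurry f)) :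
    Differentiable ℝ (Function.uncurry (pdt f)) := by
  rw [aux_pdt (aux_diff hf)]
  exact (aux_diff2 hf).clm_apply (differentiable_const _)

theorem aux_symm {f : ℝ → ℝ → E} (hf : ContDiff ℝ 3 (Function.uncurry f)) (x t : ℝ) :
    pdx (pdt f) x t = pdt (pdx f) x t := by
  have hs : IsSymmSndFDerivAt ℝ (Function.uncurry f) (x, t) :=
    hf.contDiffAt.isSymmSndFDerivAt (by simp; norm_num)
  have key : ∀ v w : ℝ × ℝ, fderiv ℝ (fun p => fderiv ℝ (Function.uncurry f) p v) (x, t) w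
      = fderiv ℝ (fderiv ℝ (Function.uncurry f)) (x, t) w v := by
    intro v w
    have h := ((aux_diff2 hf) (x, t)).hasFDerivAt.clm_apply (hasFDerivAt_const v (x, t))
    rw [h.fderiv]
    simp
  have h1 : pdx (pdt f) x t = fderiv ℝ (Function.uncurry (pdt f)) (x, t) (1, 0) :=
    (aux_hx (aux_pdt_diff hf) x t).deriv
  have h2 : pdt (pdx f) x t = fderiv ℝ (Function.uncurry (pdx f)) (x, t) (0, 1) :=
    (aux_ht (aux_pdx_diff hf) x t).deriv
  rw [h1, h2, aux_pdx (aux_diff hf), aux_pdt (aux_diff hf), key, key]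
  exact hs _ _
end aux

theorem stmt7 {N : ℕ} (hN : 1 ≤ N)
    (S Sb : ℝ → ℝ → Fin N → ℂ) (L ψ : ℝ → ℝ → ℂ) (φ : ℝ → ℝ → Fin N → ℂ) (ζ : ℂ)
    (hS3 : ContDiff ℝ 3 (Function.uncurry S)) (hSb3 : ContDiff ℝ 3 (Function.uncurry Sb))
    (hL3 : ContDiff ℝ 3 (Function.uncurry L)) (hψ3 : ContDiff ℝ 3 (Function.uncurry ψ))
    (hφ3 : ContDiff ℝ 3 (Function.uncurry φ))
    (hspec : ∀ (x t : ℝ),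
      pdx (pdx ψ) x t + L x t * ψ x t + pair (S x t) (φ x t) = ζ * ψ x t)
    (hφx : ∀ (x t : ℝ), pdx φ x t = (Complex.I * ψ x t) • Sb x t)
    (hψt : ∀ (x t : ℝ), Complex.I * pdt ψ x t = pdx (pdx ψ) x t + L x t * ψ x t)
    (hφt : ∀ (x t : ℝ), pdt φ x t = (pdx ψ x t) • Sb x t - (ψ x t) • pdx Sb x t)
    (hψ0 : ∀ (x t : ℝ), ψ x t ≠ 0) :
    ∀ (x t : ℝ),
      Complex.I • pdt Sb x t = -(pdx (pdx Sb) x t) - (L x t) • Sb x t := by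
  intro x t
  have hs := aux_symm hφ3 x t
  have e1 : pdt φ = fun x t => (pdx ψ x t) • Sb x t - (ψ x t) • pdx Sb x t := by
    funext x t; exact hφt x t
  have e2 : pdx φ = fun x t => (Complex.I * ψ x t) • Sb x t := by
    funext x t; exact hφx x t
  have d1 := ((aux_dx (aux_pdx_diff hψ3) x t).smul (aux_dx (aux_diff hSb3) x t)).sub
    ((aux_dx (aux_diff hψ3) x t).smul (aux_dx (aux_pdx_diff hSb3) x t))
  have d2 := ((aux_dt (aux_diff hψ3) x t).const_mul Complex.I).smul (aux_dt (aux_diff hSb3) x t)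
  have f1 := d1.deriv
  have f2 := d2.deriv
  rw [e1, e2] at hs
  have hs := f1.symm.trans (Eq.trans hs f2)
  funext k
  have hk := congrFun hs k
  simp only [Pi.add_apply, Pi.sub_apply, Pi.smul_apply, Pi.neg_apply, smul_eq_mul] at hk ⊢
  apply mul_left_cancel₀ (hψ0 x t)
  linear_combination -hk - Sb x t k * hψt x t
end
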